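/- Let V be an abelian group carrying an 𝓔(r)-representation, with the derived operators e_I, f_I and the inductively defined families p_{a,i}, q_{a,i} (a ≤ 0, i ∈ [r]). Then for all integers a, b ≤ 0 and all i, j ∈ [r]: p_{a,i}∘p_{a,i} = 0, q_{a,i}∘q_{a,i} = 0, p_{a,i}∘p_{b,j} + p_{b,j}∘p_{a,i} = 0, q_{a,i}∘q_{b,j} + q_{b,j}∘q_{a,i} = 0, and p_{a,i}∘q_{b,j} + q_{b,j}∘p_{a,i} = δ_{ij}δ_{ab}·id_V. -/

import Mathlib

/-- The ordered product `q_I = q_{a_0} ∘ q_{a_1} ∘ ⋯ ∘ q_{a_k}` for `I = {a_0 < ⋯ < a_k}`. -/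
def qProd {r : ℕ} {V : Type*} [AddCommGroup V] (q : Fin r → AddMonoid.End V)
    (I : Finset (Fin r)) : AddMonoid.End V :=
  ((I.sort (· ≤ ·)).map q).prod

/-- The ordered product `p_I = p_{a_k} ∘ p_{a_{k-1}} ∘ ⋯ ∘ p_{a_0}` for `I = {a_0 < ⋯ < a_k}`. -/
def pProd {r : ℕ} {V : Type*} [AddCommGroup V] (p : Fin r → AddMonoid.End V)
    (I : Finset (Fin r)) : AddMonoid.End V :=
  ((I.sort (· ≤ ·)).reverse.map p).prod

/-- An `𝓔(r)`-representation on an abelian group `V`: a `Cl(r)`-representation `(p, q)`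
together with endomorphisms `e`, `f` satisfying `pᵢ∘e = 0`, `f∘qᵢ = 0`, `f∘e = id` and
`e∘f = p_{[r]}∘q_{[r]}`. -/
structure SRep (r : ℕ) (V : Type*) [AddCommGroup V] where
  p : Fin r → AddMonoid.End V
  q : Fin r → AddMonoid.End V
  e : AddMonoid.End V
  f : AddMonoid.End V
  p_sq : ∀ i, p i * p i = 0
  q_sq : ∀ i, q i * q i = 0
  p_p : ∀ i j, p i * p j + p j * p i = 0
  q_q : ∀ i j, q i * q j + q j * q i = 0
  p_q : ∀ i j, p i * q j + q j * p i = if i = j then 1 else 0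
  p_e : ∀ i, p i * e = 0
  f_q : ∀ i, f * q i = 0
  f_e : f * e = 1
  e_f : e * f = pProd p Finset.univ * qProd q Finset.univ

namespace SRep

variable {r : ℕ} {V : Type*} [AddCommGroup V]

/-- The derived operator `e_I := q_I ∘ e`. -/
def eI (ρ : SRep r V) (I : Finset (Fin r)) : AddMonoid.End V := qProd ρ.q I * ρ.e

/-- The derived operator `f_I := f ∘ p_I`. -/
def fI (ρ : SRep r V) (I : Finset (Fin r)) : AddMonoid.End V := ρ.f * pProd ρ.p I

/-- The inductively defined family `p_{-n,i}`:  `p_{0,i} := pᵢ` and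
`p_{a,i} := Σ_{I⊆[r]} (−1)^{|I|} e_I ∘ p_{a+1,i} ∘ f_I` for `a < 0`. -/
noncomputable def pNeg (ρ : SRep r V) : ℕ → Fin r → AddMonoid.End V
  | 0 => ρ.p
  | n + 1 => fun i =>
      ∑ I : Finset (Fin r), ((-1 : ℤ) ^ I.card) • (ρ.eI I * ρ.pNeg n i * ρ.fI I)

/-- The inductively defined family `q_{-n,i}`:  `q_{0,i} := qᵢ` and
`q_{a,i} := Σ_{I⊆[r]} (−1)^{|I|} e_I ∘ q_{a+1,i} ∘ f_I` for `a < 0`. -/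
noncomputable def qNeg (ρ : SRep r V) : ℕ → Fin r → AddMonoid.End V
  | 0 => ρ.q
  | n + 1 => fun i =>
      ∑ I : Finset (Fin r), ((-1 : ℤ) ^ I.card) • (ρ.eI I * ρ.qNeg n i * ρ.fI I)

/-- The operator `p_{a,i}` for `a ≤ 0`. -/
noncomputable def pA (ρ : SRep r V) (a : ℤ) (i : Fin r) : AddMonoid.End V :=
  ρ.pNeg (-a).toNat i

/-- The operator `q_{a,i}` for `a ≤ 0`. -/
noncomputable def qA (ρ : SRep r V) (a : ℤ) (i : Fin r) : AddMonoid.End V :=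
  ρ.qNeg (-a).toNat i

end SRep

/-!
Statement 16: the inductively defined families `p_{a,i}`, `q_{a,i}` (`a ≤ 0`) satisfy the
Clifford relations `p_{a,i}² = q_{a,i}² = 0`, `{p_{a,i}, p_{b,j}} = {q_{a,i}, q_{b,j}} = 0`
and `{p_{a,i}, q_{b,j}} = δ_{ij}δ_{ab}·id`.
-/

/-!
For an integer `ε` put `S_ε(X) = ∑_I ε^|I| q_I X p_I`; then `p_{a-1,i} = S_{-1}(e p_{a,i} f)`, and
likewise for `q`. When `p_i X = 0` and `X q_i = 0` for all `i`, as for `X = e x f`, one has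
`p_i S_ε(X) = ε S_ε(X) p_i` and `S_ε(X) q_i = ε q_i S_ε(X)`, and for two such elements
`S_ε(X) S_δ(Y) = S_{εδ}(XY)`. Finally `S_1(ef) = 1`, because `ef` is the product of the commuting
idempotents `p_i q_i` and `p_i q_i + q_i (p_i q_i) p_i = 1`. So `x ↦ S_{-1}(e x f)` takes values in
elements anticommuting with every `p_i` and `q_i`, and carries `xy + yx = c` to the same relation
for `c = 0, 1`.
-/

/-- A `Cl(r)`-representation: the canonical anticommutation relations for the families `p`, `q`. -/
structure IsClRep {r : ℕ} {V : Type*} [AddCommGroup V] (p q : Fin r → AddMonoid.End V) :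
    Prop where
  p_sq : ∀ i, p i * p i = 0
  q_sq : ∀ i, q i * q i = 0
  p_p : ∀ i j, p i * p j + p j * p i = 0
  q_q : ∀ i j, q i * q j + q j * q i = 0
  p_q : ∀ i j, p i * q j + q j * p i = if i = j then 1 else 0

/-- The operator `S_ε(X) = ∑_{I ⊆ s} ε^|I| q_I X p_I`. The weight `ε = -1` gives the recursion
defining `p_{a,i}` and `q_{a,i}`; the weight `ε = 1` appears in products of two such operators. -/
def sandwich {r : ℕ} {V : Type*} [AddCommGroup V] (p q : Fin r → AddMonoid.End V) (ε : ℤ)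
    (s : Finset (Fin r)) (X : AddMonoid.End V) : AddMonoid.End V :=
  ∑ I ∈ s.powerset, ε ^ I.card • (qProd q I * X * pProd p I)

section OrderedProducts

variable {r : ℕ} {V : Type*} [AddCommGroup V] {p q : Fin r → AddMonoid.End V}
  {a : Fin r} {s : Finset (Fin r)}

theorem sort_insert_of_forall_lt (h : ∀ i ∈ s, a < i) :
    (insert a s).sort (· ≤ ·) = a :: s.sort (· ≤ ·) :=
  Finset.sort_insert (r := (· ≤ ·)) (fun i hi => (h i hi).le) fun ha => lt_irrefl a (h a ha)

theorem qProd_insert_of_forall_lt (h : ∀ i ∈ s, a < i) :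
    qProd q (insert a s) = q a * qProd q s := by
  rw [qProd, sort_insert_of_forall_lt h, List.map_cons, List.prod_cons, qProd]

theorem pProd_insert_of_forall_lt (h : ∀ i ∈ s, a < i) :
    pProd p (insert a s) = pProd p s * p a := by
  rw [pProd, sort_insert_of_forall_lt h, List.reverse_cons, List.map_append, List.prod_append,
    List.map_singleton, List.prod_singleton, pProd]

theorem commute_pProd {Z : AddMonoid.End V} (h : ∀ i ∈ s, Commute Z (p i)) :
    Commute Z (pProd p s) := by
  refine Commute.list_prod_right _ _ fun x hx => ?_
  obtain ⟨i, hi, rfl⟩ := List.mem_map.1 hx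
  exact h i (by simpa using hi)

theorem sandwich_empty (ε : ℤ) (X : AddMonoid.End V) : sandwich p q ε ∅ X = X := by
  simp [sandwich, qProd, pProd]

theorem sandwich_insert_of_forall_lt (h : ∀ i ∈ s, a < i) (ε : ℤ) (X : AddMonoid.End V) :
    sandwich p q ε (insert a s) X =
      sandwich p q ε s X + ε • (q a * sandwich p q ε s X * p a) := by
  have ha : a ∉ s := fun ha => lt_irrefl a (h a ha)
  simp only [sandwich]
  rw [Finset.sum_powerset_insert ha, Finset.mul_sum, Finset.sum_mul, ← Finset.sum_zsmul]
  refine congrArg _ (Finset.sum_congr rfl fun I hI => ?_)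
  have hIs : I ⊆ s := Finset.mem_powerset.1 hI
  have haI : ∀ i ∈ I, a < i := fun i hi => h i (hIs hi)
  rw [Finset.card_insert_of_notMem fun haI' => ha (hIs haI'), qProd_insert_of_forall_lt haI,
    pProd_insert_of_forall_lt haI, pow_succ', mul_smul, mul_smul_comm, smul_mul_assoc]
  simp only [mul_assoc]

theorem sandwich_zero (ε : ℤ) : sandwich p q ε s 0 = 0 := by
  simp [sandwich]

theorem sandwich_add (ε : ℤ) (X Y : AddMonoid.End V) :
    sandwich p q ε s (X + Y) = sandwich p q ε s X + sandwich p q ε s Y := by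
  simp only [sandwich, mul_add, add_mul, zsmul_add, Finset.sum_add_distrib]

end OrderedProducts

namespace IsClRep

variable {r : ℕ} {V : Type*} [AddCommGroup V] {p q : Fin r → AddMonoid.End V}
  {i j : Fin r} {s : Finset (Fin r)} {X Y Z : AddMonoid.End V}

theorem p_mul_q_self (h : IsClRep p q) (i : Fin r) : p i * q i = 1 - q i * p i :=
  eq_sub_of_add_eq <| (h.p_q i i).trans (if_pos rfl)

theorem p_mul_q_of_ne (h : IsClRep p q) (hij : i ≠ j) : p i * q j = -(q j * p i) :=
  eq_neg_of_add_eq_zero_left <| (h.p_q i j).trans (if_neg hij)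

theorem p_mul_p (h : IsClRep p q) (i j : Fin r) : p i * p j = -(p j * p i) :=
  eq_neg_of_add_eq_zero_left (h.p_p i j)

theorem q_mul_q (h : IsClRep p q) (i j : Fin r) : q i * q j = -(q j * q i) :=
  eq_neg_of_add_eq_zero_left (h.q_q i j)

theorem p_mul_sandwich_of_notMem (h : IsClRep p q) (ε : ℤ) (hX : p i * X = 0) (hi : i ∉ s) :
    p i * sandwich p q ε s X = 0 := by
  induction s using Finset.induction_on_min with
  | empty => rwa [sandwich_empty]
  | insert a s has ih =>
    obtain ⟨hia, his⟩ : i ≠ a ∧ i ∉ s := by simpa using hi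
    rw [sandwich_insert_of_forall_lt has, mul_add, ih his, mul_smul_comm, ← mul_assoc, ← mul_assoc,
      h.p_mul_q_of_ne hia, neg_mul, mul_assoc (q a), ih his]
    simp

theorem sandwich_mul_q_of_notMem (h : IsClRep p q) (ε : ℤ) (hX : X * q i = 0) (hi : i ∉ s) :
    sandwich p q ε s X * q i = 0 := by
  induction s using Finset.induction_on_min with
  | empty => rwa [sandwich_empty]
  | insert a s has ih =>
    obtain ⟨hia, his⟩ : i ≠ a ∧ i ∉ s := by simpa using hi
    rw [sandwich_insert_of_forall_lt has, add_mul, ih his, smul_mul_assoc, mul_assoc,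
      h.p_mul_q_of_ne hia.symm, mul_neg, mul_assoc, ← mul_assoc _ (q i), ih his]
    simp

theorem p_mul_sandwich_of_mem (h : IsClRep p q) (ε : ℤ) (hX : p i * X = 0) (hi : i ∈ s) :
    p i * sandwich p q ε s X = ε • (sandwich p q ε s X * p i) := by
  induction s using Finset.induction_on_min with
  | empty => simp at hi
  | insert a s has ih =>
    rw [sandwich_insert_of_forall_lt has]
    set A := sandwich p q ε s X
    rcases eq_or_ne i a with rfl | hia
    · have hA : p i * A = 0 := h.p_mul_sandwich_of_notMem ε hX fun hi => lt_irrefl i (has i hi)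
      calc p i * (A + ε • (q i * A * p i))
          = p i * A + ε • (p i * q i * A * p i) := by
            simp only [mul_add, mul_smul_comm, mul_assoc]
        _ = ε • (A * p i) := by
            rw [h.p_mul_q_self, sub_mul, mul_assoc (q i), hA, one_mul, mul_zero, sub_zero, zero_add]
        _ = ε • ((A + ε • (q i * A * p i)) * p i) := by
            rw [add_mul, smul_mul_assoc, mul_assoc _ (p i), h.p_sq, mul_zero, zsmul_zero, add_zero]
    · have hA : p i * A = ε • (A * p i) := ih (Finset.mem_of_mem_insert_of_ne hi hia)
      calc p i * (A + ε • (q a * A * p a))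
          = p i * A + ε • (p i * q a * A * p a) := by
            simp only [mul_add, mul_smul_comm, mul_assoc]
        _ = p i * A - ε • (q a * (p i * A) * p a) := by
            simp only [h.p_mul_q_of_ne hia, neg_mul, zsmul_neg, mul_assoc, sub_eq_add_neg]
        _ = ε • (A * p i - ε • (q a * A * (p i * p a))) := by
            simp only [hA, zsmul_sub, mul_smul_comm, smul_mul_assoc, mul_assoc]
        _ = ε • ((A + ε • (q a * A * p a)) * p i) := by
            simp only [h.p_mul_p i a, mul_neg, zsmul_neg, sub_neg_eq_add, add_mul, smul_mul_assoc,
              mul_assoc]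

theorem sandwich_mul_q_of_mem (h : IsClRep p q) (ε : ℤ) (hX : X * q i = 0) (hi : i ∈ s) :
    sandwich p q ε s X * q i = ε • (q i * sandwich p q ε s X) := by
  induction s using Finset.induction_on_min with
  | empty => simp at hi
  | insert a s has ih =>
    rw [sandwich_insert_of_forall_lt has]
    set A := sandwich p q ε s X
    rcases eq_or_ne i a with rfl | hia
    · have hA : A * q i = 0 := h.sandwich_mul_q_of_notMem ε hX fun hi => lt_irrefl i (has i hi)
      calc (A + ε • (q i * A * p i)) * q i
          = A * q i + ε • (q i * A * (p i * q i)) := by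
            simp only [add_mul, smul_mul_assoc, mul_assoc]
        _ = ε • (q i * A) := by
            rw [h.p_mul_q_self, mul_sub, mul_one, mul_assoc (q i), ← mul_assoc A, hA, zero_mul,
              mul_zero, sub_zero, zero_add]
        _ = ε • (q i * (A + ε • (q i * A * p i))) := by
            rw [mul_add, mul_smul_comm, ← mul_assoc (q i), ← mul_assoc (q i), h.q_sq, zero_mul,
              zero_mul, zsmul_zero, add_zero]
    · have hA : A * q i = ε • (q i * A) := ih (Finset.mem_of_mem_insert_of_ne hi hia)
      calc (A + ε • (q a * A * p a)) * q i
          = A * q i + ε • (q a * A * (p a * q i)) := by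
            simp only [add_mul, smul_mul_assoc, mul_assoc]
        _ = A * q i - ε • (q a * (A * q i) * p a) := by
            simp only [h.p_mul_q_of_ne hia.symm, mul_neg, zsmul_neg, mul_assoc, sub_eq_add_neg]
        _ = ε • (q i * A - ε • (q a * q i * A * p a)) := by
            simp only [hA, zsmul_sub, mul_smul_comm, smul_mul_assoc, mul_assoc]
        _ = ε • (q i * (A + ε • (q a * A * p a))) := by
            simp only [h.q_mul_q a i, neg_mul, zsmul_neg, sub_neg_eq_add, mul_add, mul_smul_comm,
              mul_assoc]

theorem sandwich_mul_sandwich (h : IsClRep p q) (ε δ : ℤ) (hX : ∀ i ∈ s, X * q i = 0)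
    (hY : ∀ i ∈ s, p i * Y = 0) :
    sandwich p q ε s X * sandwich p q δ s Y = sandwich p q (ε * δ) s (X * Y) := by
  induction s using Finset.induction_on_min with
  | empty => simp only [sandwich_empty]
  | insert a s has ih =>
    have ha : a ∉ s := fun ha => lt_irrefl a (has a ha)
    have hA := h.sandwich_mul_q_of_notMem ε (hX a (Finset.mem_insert_self a s)) ha
    have hB := h.p_mul_sandwich_of_notMem δ (hY a (Finset.mem_insert_self a s)) ha
    simp only [sandwich_insert_of_forall_lt has]
    rw [← ih (fun i hi => hX i (Finset.mem_insert_of_mem hi))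
      fun i hi => hY i (Finset.mem_insert_of_mem hi)]
    set A := sandwich p q ε s X
    set B := sandwich p q δ s Y
    have hpq : A * (p a * q a) * B = A * B := by
      rw [h.p_mul_q_self, mul_sub, ← mul_assoc A, hA, zero_mul, sub_zero, mul_one]
    calc (A + ε • (q a * A * p a)) * (B + δ • (q a * B * p a))
        = A * B + δ • (A * q a * B * p a) + ε • (q a * A * (p a * B)) +
            (ε * δ) • (q a * (A * (p a * q a) * B) * p a) := by
          simp only [add_mul, mul_add, mul_smul_comm, smul_mul_assoc, zsmul_add, mul_comm ε δ,
            mul_smul, mul_assoc]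
          abel
      _ = A * B + (ε * δ) • (q a * (A * B) * p a) := by
          simp only [hA, hB, hpq, zero_mul, mul_zero, zsmul_zero, add_zero]

theorem commute_p_mul_q_p (h : IsClRep p q) (hij : i ≠ j) : Commute (p i * q i) (p j) := by
  have hqp : q i * p j = -(p j * q i) := by rw [h.p_mul_q_of_ne hij.symm, neg_neg]
  rw [commute_iff_eq, mul_assoc, hqp, mul_neg, ← mul_assoc, h.p_mul_p i j, neg_mul, neg_neg,
    mul_assoc]

theorem commute_p_mul_q_q (h : IsClRep p q) (hij : i ≠ j) : Commute (p i * q i) (q j) := by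
  rw [commute_iff_eq, mul_assoc, h.q_mul_q i j, mul_neg, ← mul_assoc, h.p_mul_q_of_ne hij, neg_mul,
    neg_neg, mul_assoc]

theorem pProd_mul_qProd_insert (h : IsClRep p q) (has : ∀ j ∈ s, i < j) :
    pProd p (insert i s) * qProd q (insert i s) = p i * q i * (pProd p s * qProd q s) := by
  have hcomm : Commute (p i * q i) (pProd p s) :=
    commute_pProd fun j hj => h.commute_p_mul_q_p (has j hj).ne
  rw [pProd_insert_of_forall_lt has, qProd_insert_of_forall_lt has, ← mul_assoc (p i * q i),
    hcomm.eq]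
  simp only [mul_assoc]

theorem mul_p_mul_q_add (h : IsClRep p q) (hZ : Commute Z (q i)) :
    Z * (p i * q i) + q i * (Z * (p i * q i)) * p i = Z :=
  calc Z * (p i * q i) + q i * (Z * (p i * q i)) * p i
      = Z * (p i * q i) + q i * Z * (p i * q i) * p i := by simp only [mul_assoc]
    _ = Z * (1 - q i * p i) + Z * q i * (1 - q i * p i) * p i := by rw [h.p_mul_q_self, hZ.eq]
    _ = Z - Z * (q i * q i) * (p i * p i) := by noncomm_ring
    _ = Z := by rw [h.p_sq, mul_zero, sub_zero]

theorem sandwich_one_mul_pProd_mul_qProd (h : IsClRep p q) (hZ : ∀ i ∈ s, Commute Z (q i)) :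
    sandwich p q 1 s (Z * (pProd p s * qProd q s)) = Z := by
  induction s using Finset.induction_on_min generalizing Z with
  | empty => simp [sandwich_empty, pProd, qProd]
  | insert a s has ih =>
    have hinner : sandwich p q 1 s (Z * (p a * q a) * (pProd p s * qProd q s)) = Z * (p a * q a) :=
      ih fun i hi => (hZ i (Finset.mem_insert_of_mem hi)).mul_left
        (h.commute_p_mul_q_q (has i hi).ne)
    rw [h.pProd_mul_qProd_insert has, ← mul_assoc, sandwich_insert_of_forall_lt has, hinner,
      one_smul, h.mul_p_mul_q_add (hZ a (Finset.mem_insert_self a s))]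

end IsClRep

namespace SRep

variable {r : ℕ} {V : Type*} [AddCommGroup V]

theorem isClRep (ρ : SRep r V) : IsClRep ρ.p ρ.q :=
  ⟨ρ.p_sq, ρ.q_sq, ρ.p_p, ρ.q_q, ρ.p_q⟩

/-- The map `x ↦ ∑_I (-1)^|I| e_I x f_I`, which takes `p_{a,i}` to `p_{a-1,i}` and `q_{a,i}` to
`q_{a-1,i}`. -/
def shift (ρ : SRep r V) (x : AddMonoid.End V) : AddMonoid.End V :=
  sandwich ρ.p ρ.q (-1) Finset.univ (ρ.e * x * ρ.f)

theorem shift_eq_sum (ρ : SRep r V) (x : AddMonoid.End V) :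
    ρ.shift x = ∑ I : Finset (Fin r), (-1 : ℤ) ^ I.card • (ρ.eI I * x * ρ.fI I) := by
  simp only [shift, sandwich, Finset.powerset_univ, eI, fI, mul_assoc]

theorem pNeg_eq_iterate_shift (ρ : SRep r V) (n : ℕ) (i : Fin r) :
    ρ.pNeg n i = ρ.shift^[n] (ρ.p i) := by
  induction n with
  | zero => rfl
  | succ n ih => rw [Function.iterate_succ_apply', ← ih, shift_eq_sum, pNeg]

theorem qNeg_eq_iterate_shift (ρ : SRep r V) (n : ℕ) (i : Fin r) :
    ρ.qNeg n i = ρ.shift^[n] (ρ.q i) := by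
  induction n with
  | zero => rfl
  | succ n ih => rw [Function.iterate_succ_apply', ← ih, shift_eq_sum, qNeg]

theorem p_mul_e_mul_mul_f (ρ : SRep r V) (x : AddMonoid.End V) (i : Fin r) :
    ρ.p i * (ρ.e * x * ρ.f) = 0 := by
  rw [← mul_assoc, ← mul_assoc, ρ.p_e, zero_mul, zero_mul]

theorem e_mul_mul_f_mul_q (ρ : SRep r V) (x : AddMonoid.End V) (i : Fin r) :
    ρ.e * x * ρ.f * ρ.q i = 0 := by
  rw [mul_assoc, ρ.f_q, mul_zero]

theorem p_mul_shift_add_shift_mul_p (ρ : SRep r V) (i : Fin r) (x : AddMonoid.End V) :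
    ρ.p i * ρ.shift x + ρ.shift x * ρ.p i = 0 := by
  rw [shift, ρ.isClRep.p_mul_sandwich_of_mem _ (ρ.p_mul_e_mul_mul_f x i) (Finset.mem_univ i),
    neg_one_smul, neg_add_cancel]

theorem q_mul_shift_add_shift_mul_q (ρ : SRep r V) (i : Fin r) (x : AddMonoid.End V) :
    ρ.q i * ρ.shift x + ρ.shift x * ρ.q i = 0 := by
  rw [shift, ρ.isClRep.sandwich_mul_q_of_mem _ (ρ.e_mul_mul_f_mul_q x i) (Finset.mem_univ i),
    neg_one_smul, add_neg_cancel]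

theorem shift_mul_shift (ρ : SRep r V) (x y : AddMonoid.End V) :
    ρ.shift x * ρ.shift y = sandwich ρ.p ρ.q 1 Finset.univ (ρ.e * (x * y) * ρ.f) := by
  have hmul : ρ.e * x * ρ.f * (ρ.e * y * ρ.f) = ρ.e * (x * y) * ρ.f := by
    calc ρ.e * x * ρ.f * (ρ.e * y * ρ.f) = ρ.e * x * (ρ.f * ρ.e) * y * ρ.f := by
          simp only [mul_assoc]
      _ = ρ.e * (x * y) * ρ.f := by simp only [ρ.f_e, mul_one, mul_assoc]
  rw [shift, shift, ρ.isClRep.sandwich_mul_sandwich _ _ (fun i _ => ρ.e_mul_mul_f_mul_q x i)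
    fun i _ => ρ.p_mul_e_mul_mul_f y i, hmul, neg_one_mul, neg_neg]

theorem shift_mul_shift_add_shift_mul_shift (ρ : SRep r V) (x y : AddMonoid.End V) :
    ρ.shift x * ρ.shift y + ρ.shift y * ρ.shift x =
      sandwich ρ.p ρ.q 1 Finset.univ (ρ.e * (x * y + y * x) * ρ.f) := by
  rw [shift_mul_shift, shift_mul_shift, ← sandwich_add, mul_add, add_mul]

theorem sandwich_one_e_mul_f (ρ : SRep r V) :
    sandwich ρ.p ρ.q 1 Finset.univ (ρ.e * ρ.f) = 1 := by
  simpa only [ρ.e_f, one_mul] using ρ.isClRep.sandwich_one_mul_pProd_mul_qProd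
    (s := Finset.univ) fun i _ => Commute.one_left (ρ.q i)

theorem sandwich_one_e_mul_ite_mul_f (ρ : SRep r V) (P : Prop) [Decidable P] :
    sandwich ρ.p ρ.q 1 Finset.univ (ρ.e * (if P then 1 else 0) * ρ.f) = if P then 1 else 0 := by
  split_ifs
  · rw [mul_one, sandwich_one_e_mul_f]
  · rw [mul_zero, zero_mul, sandwich_zero]

theorem iterate_shift_mul_self (ρ : SRep r V) {x : AddMonoid.End V} (hx : x * x = 0) (n : ℕ) :
    ρ.shift^[n] x * ρ.shift^[n] x = 0 := by
  induction n with
  | zero => exact hx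
  | succ n ih =>
    rw [Function.iterate_succ_apply', shift_mul_shift, ih, mul_zero, zero_mul, sandwich_zero]

theorem iterate_shift_anticommutator (ρ : SRep r V) {x y : AddMonoid.End V} {P : Prop}
    [Decidable P] (hx : ∀ z, x * ρ.shift z + ρ.shift z * x = 0)
    (hy : ∀ z, y * ρ.shift z + ρ.shift z * y = 0) (hxy : x * y + y * x = if P then 1 else 0)
    (m n : ℕ) :
    ρ.shift^[m] x * ρ.shift^[n] y + ρ.shift^[n] y * ρ.shift^[m] x =
      if P ∧ m = n then 1 else 0 := by
  induction m generalizing n with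
  | zero =>
    cases n with
    | zero => simpa using hxy
    | succ n => simpa [Function.iterate_succ_apply'] using hx _
  | succ m ih =>
    cases n with
    | zero => simpa [Function.iterate_succ_apply', add_comm] using hy _
    | succ n =>
      simp only [Function.iterate_succ_apply', shift_mul_shift_add_shift_mul_shift, ih,
        sandwich_one_e_mul_ite_mul_f, Nat.add_right_cancel_iff]

theorem pNeg_anticommutator_pNeg (ρ : SRep r V) (m n : ℕ) (i j : Fin r) :
    ρ.pNeg m i * ρ.pNeg n j + ρ.pNeg n j * ρ.pNeg m i = 0 := by
  simpa [pNeg_eq_iterate_shift] using ρ.iterate_shift_anticommutator (P := False)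
    (ρ.p_mul_shift_add_shift_mul_p i) (ρ.p_mul_shift_add_shift_mul_p j)
    (by simpa using ρ.p_p i j) m n

theorem qNeg_anticommutator_qNeg (ρ : SRep r V) (m n : ℕ) (i j : Fin r) :
    ρ.qNeg m i * ρ.qNeg n j + ρ.qNeg n j * ρ.qNeg m i = 0 := by
  simpa [qNeg_eq_iterate_shift] using ρ.iterate_shift_anticommutator (P := False)
    (ρ.q_mul_shift_add_shift_mul_q i) (ρ.q_mul_shift_add_shift_mul_q j)
    (by simpa using ρ.q_q i j) m n

theorem pNeg_anticommutator_qNeg (ρ : SRep r V) (m n : ℕ) (i j : Fin r) :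
    ρ.pNeg m i * ρ.qNeg n j + ρ.qNeg n j * ρ.pNeg m i = if i = j ∧ m = n then 1 else 0 := by
  rw [pNeg_eq_iterate_shift, qNeg_eq_iterate_shift]
  exact ρ.iterate_shift_anticommutator (ρ.p_mul_shift_add_shift_mul_p i)
    (ρ.q_mul_shift_add_shift_mul_q j) (ρ.p_q i j) m n

theorem pNeg_mul_self (ρ : SRep r V) (n : ℕ) (i : Fin r) : ρ.pNeg n i * ρ.pNeg n i = 0 := by
  rw [pNeg_eq_iterate_shift, ρ.iterate_shift_mul_self (ρ.p_sq i)]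

theorem qNeg_mul_self (ρ : SRep r V) (n : ℕ) (i : Fin r) : ρ.qNeg n i * ρ.qNeg n i = 0 := by
  rw [qNeg_eq_iterate_shift, ρ.iterate_shift_mul_self (ρ.q_sq i)]

end SRep

theorem stmt_16 {r : ℕ} (hr : 0 < r) {V : Type} [AddCommGroup V] (ρ : SRep r V) :
    ∀ a : ℤ, a ≤ 0 → ∀ b : ℤ, b ≤ 0 → ∀ i j : Fin r,
      ρ.pA a i * ρ.pA a i = 0 ∧
      ρ.qA a i * ρ.qA a i = 0 ∧
      ρ.pA a i * ρ.pA b j + ρ.pA b j * ρ.pA a i = 0 ∧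
      ρ.qA a i * ρ.qA b j + ρ.qA b j * ρ.qA a i = 0 ∧
      ρ.pA a i * ρ.qA b j + ρ.qA b j * ρ.pA a i =
        if i = j ∧ a = b then 1 else 0 := by
  intro a ha b hb i j
  have hab : (-a).toNat = (-b).toNat ↔ a = b := by lia
  refine ⟨ρ.pNeg_mul_self _ i, ρ.qNeg_mul_self _ i, ρ.pNeg_anticommutator_pNeg _ _ i j,
    ρ.qNeg_anticommutator_qNeg _ _ i j, ?_⟩
  simpa only [SRep.pA, SRep.qA, hab] using ρ.pNeg_anticommutator_qNeg (-a).toNat (-b).toNat i j
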